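/- Let P be a dcpo. Let Γ(P) be the poset of all nonempty Scott closed subsets of P ordered by inclusion, let Γ_c(P) ⊆ Γ(P) consist of the nonempty consistent Scott closed subsets, and let the Scott closure of Γ_c(P) in Γ(P) be the smallest subfamily of Γ(P) that contains Γ_c(P), is a lower set in Γ(P), and contains the least upper bound (in Γ(P)) of each of its nonempty directed subfamilies. Then a nonempty Scott closed subset A of P belongs to the Scott closure of Γ_c(P) in Γ(P) if and only if A is ⋁-existing. -/

import Mathlib

/-!
Two facts carry the proof. In a dcpo-∨↑-semilattice every nonempty bounded set has a supremum,
namely the directed supremum of the suprema of its nonempty finite subsets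
(`exists_isLUB_of_bddAbove`). And every nonempty family in `Γ(P)` has a least upper bound, the
Scott closure of its union (`exists_isLUB_gamma`).

By the first fact, the ⋁-existing members of `Γ(P)` form a Scott closed family containing all
consistent members: bounded images have suprema, and for a directed family with least upper bound
`A` the suprema of the images of its members form a directed set whose supremum `s` bounds `f '' A`,
because `{x | f x ≤ s}` is Scott closed.

Conversely, let `L` be the Scott closure of `Γ_c(P)` in `Γ(P)`, ordered by inclusion. By the second
fact `L` is a dcpo-∨↑-semilattice, and `x ↦ ↓x` is a Scott continuous map `P → L`. If `A` is
⋁-existing then the image of `A` has an upper bound in `L`; it contains `A`, and `L` is a lower set,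
so `A ∈ L`.
-/

universe u v

/-- A *dcpo*: a partial order in which every nonempty directed subset has a least upper bound. -/
def IsDcpo (P : Type*) [PartialOrder P] : Prop :=
  ∀ d : Set P, d.Nonempty → DirectedOn (· ≤ ·) d → ∃ a, IsLUB d a

/-- A *dcpo-∨↑-semilattice*: a dcpo in which every consistent pair of elements
(i.e. pair with an upper bound) has a least upper bound. -/
def IsDcpoVSemilattice (L : Type*) [PartialOrder L] : Prop :=
  IsDcpo L ∧ ∀ x y : L, BddAbove ({x, y} : Set L) → ∃ a, IsLUB ({x, y} : Set L) a

/-- Scott continuity: `f` maps least upper bounds of nonempty directed sets to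
least upper bounds of the images. -/
def IsScottContinuous {P : Type*} {L : Type*} [PartialOrder P] [PartialOrder L]
    (f : P → L) : Prop :=
  ∀ d : Set P, d.Nonempty → DirectedOn (· ≤ ·) d → ∀ a, IsLUB d a → IsLUB (f '' d) (f a)

/-- A *Scott closed* set: a lower set closed under least upper bounds of its
nonempty directed subsets. -/
def IsScottClosed {P : Type*} [PartialOrder P] (A : Set P) : Prop :=
  IsLowerSet A ∧ ∀ d : Set P, d ⊆ A → d.Nonempty → DirectedOn (· ≤ ·) d →
    ∀ a, IsLUB d a → a ∈ A

/-- The Scott closure of a set: the smallest Scott closed set containing it. -/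
def scottClosure {P : Type*} [PartialOrder P] (A : Set P) : Set P :=
  ⋂₀ {C | IsScottClosed C ∧ A ⊆ C}

/-- A subset `A` of a dcpo `P` is *⋁-existing* if for every Scott continuous map `f`
into an arbitrary dcpo-∨↑-semilattice `L`, the supremum of `f '' A` exists in `L`. -/
def SupExisting {P : Type u} [PartialOrder P] (A : Set P) : Prop :=
  ∀ (L : Type v) [PartialOrder L], IsDcpoVSemilattice L →
    ∀ f : P → L, IsScottContinuous f → ∃ a, IsLUB (f '' A) a

/-- An *F-Scott closed* set: a Scott closed set containing the least upper bound of
each of its nonempty finite consistent subsets. -/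
def IsFScottClosed {L : Type*} [PartialOrder L] (A : Set L) : Prop :=
  IsScottClosed A ∧ ∀ F : Set L, F ⊆ A → F.Nonempty → F.Finite → BddAbove F →
    ∀ a, IsLUB F a → a ∈ A

/-- The F-Scott closure of a set: the intersection of all F-Scott closed sets containing it. -/
def fScottClosure {L : Type*} [PartialOrder L] (A : Set L) : Set L :=
  ⋂₀ {C | IsFScottClosed C ∧ A ⊆ C}

/-- A *dcpo-∨↑-semilattice homomorphism*: maps least upper bounds of nonempty directed
sets and of consistent pairs to the least upper bounds of the images. -/
def IsSemilatticeHom {L : Type*} {M : Type*} [PartialOrder L] [PartialOrder M]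
    (f : L → M) : Prop :=
  (∀ d : Set L, d.Nonempty → DirectedOn (· ≤ ·) d → ∀ a, IsLUB d a → IsLUB (f '' d) (f a)) ∧
  (∀ x y : L, BddAbove ({x, y} : Set L) → ∀ a, IsLUB ({x, y} : Set L) a →
    IsLUB (f '' ({x, y} : Set L)) (f a))

/-- A subset `A` of a dcpo-∨↑-semilattice `L` is *F-⋁-existing* if for every
dcpo-∨↑-semilattice homomorphism `f` into an arbitrary dcpo-∨↑-semilattice `M`,
the supremum of `f '' A` exists in `M`. -/
def FSupExisting {L : Type u} [PartialOrder L] (A : Set L) : Prop :=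
  ∀ (M : Type v) [PartialOrder M], IsDcpoVSemilattice M →
    ∀ f : L → M, IsSemilatticeHom f → ∃ a, IsLUB (f '' A) a

/-- `P^∨`: the family of all ⋁-existing Scott closed subsets of `P`, ordered by inclusion. -/
abbrev Pvee (P : Type u) [PartialOrder P] : Type u :=
  {A : Set P // IsScottClosed A ∧ SupExisting.{u, u} A}

theorem isScottClosed_principal {P : Type u} [PartialOrder P] (x : P) :
    IsScottClosed (Set.Iic x) := by
  constructor
  · intro a b hba ha
    exact le_trans hba ha
  · intro d hd _ _ a ha
    exact ha.2 fun y hy => hd hy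

theorem supExisting_principal {P : Type u} [PartialOrder P] (x : P) :
    SupExisting.{u, v} (Set.Iic x) := by
  intro L _ _ f hf
  have hdir : DirectedOn (· ≤ ·) (Set.Iic x) := by
    intro a ha b hb
    exact ⟨x, le_refl x, ha, hb⟩
  exact ⟨f x, hf (Set.Iic x) ⟨x, Set.mem_Iic.2 (le_refl x)⟩ hdir x isLUB_Iic⟩

/-- The embedding `j` of `P` into `P^∨`, sending `x` to the principal ideal `↓x`. -/
def jmap {P : Type u} [PartialOrder P] (x : P) : Pvee P :=
  ⟨Set.Iic x, isScottClosed_principal x, supExisting_principal.{u, u} x⟩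

/-- `Γ(P)`: the poset of nonempty Scott closed subsets of `P`, ordered by inclusion. -/
abbrev Gamma (P : Type u) [PartialOrder P] : Type u :=
  {A : Set P // IsScottClosed A ∧ A.Nonempty}

theorem IsScottContinuous.monotone {P L : Type*} [PartialOrder P] [PartialOrder L] {f : P → L}
    (hf : IsScottContinuous f) : Monotone f := by
  intro x y hxy
  have hdir : DirectedOn (· ≤ ·) (Set.Iic y) := fun a ha b hb => ⟨y, le_refl y, ha, hb⟩
  exact (hf (Set.Iic y) ⟨y, le_refl y⟩ hdir y isLUB_Iic).1 ⟨x, hxy, rfl⟩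

theorem exists_isLUB_of_finite {L : Type*} [PartialOrder L] (hL : IsDcpoVSemilattice L)
    {F : Set L} (hF : F.Finite) (hne : F.Nonempty) (hb : BddAbove F) : ∃ a, IsLUB F a := by
  induction F, hF using Set.Finite.induction_on with
  | empty => exact absurd hne Set.not_nonempty_empty
  | @insert x F _ _ ih =>
    rcases F.eq_empty_or_nonempty with rfl | hFne
    · exact ⟨x, by simp⟩
    · obtain ⟨u, hu⟩ := hb
      obtain ⟨b, hbF⟩ := ih hFne ⟨u, fun y hy => hu (Set.mem_insert_of_mem x hy)⟩
      obtain ⟨c, hc⟩ := hL.2 x b ⟨u, by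
        rintro y (rfl | rfl)
        · exact hu (Set.mem_insert _ _)
        · exact hbF.2 fun z hz => hu (Set.mem_insert_of_mem x hz)⟩
      refine ⟨c, ?_, ?_⟩
      · rintro y (rfl | hy)
        · exact hc.1 (by simp)
        · exact (hbF.1 hy).trans (hc.1 (by simp))
      · intro v hv
        refine hc.2 ?_
        rintro y (rfl | rfl)
        · exact hv (Set.mem_insert _ _)
        · exact hbF.2 fun z hz => hv (Set.mem_insert_of_mem x hz)

theorem exists_isLUB_of_bddAbove {L : Type*} [PartialOrder L] (hL : IsDcpoVSemilattice L)
    {S : Set L} (hne : S.Nonempty) (hb : BddAbove S) : ∃ a, IsLUB S a := by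
  obtain ⟨x₀, hx₀⟩ := hne
  let T : Set L := {t | ∃ F : Set L, F.Finite ∧ F.Nonempty ∧ F ⊆ S ∧ IsLUB F t}
  have hST : S ⊆ T := fun x hx => ⟨{x}, Set.finite_singleton x, Set.singleton_nonempty x,
    Set.singleton_subset_iff.2 hx, isLUB_singleton⟩
  have hdir : DirectedOn (· ≤ ·) T := by
    rintro a ⟨F, hF, hFne, hFS, ha⟩ b ⟨G, hG, -, hGS, hb'⟩
    have hsub : F ∪ G ⊆ S := Set.union_subset hFS hGS
    have hfin : (F ∪ G).Finite := hF.union hG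
    obtain ⟨c, hc⟩ := exists_isLUB_of_finite hL hfin hFne.inl (hb.mono hsub)
    exact ⟨c, ⟨F ∪ G, hfin, hFne.inl, hsub, hc⟩,
      ha.2 fun y hy => hc.1 (Or.inl hy), hb'.2 fun y hy => hc.1 (Or.inr hy)⟩
  obtain ⟨a, ha⟩ := hL.1 T ⟨x₀, hST hx₀⟩ hdir
  refine ⟨a, fun x hx => ha.1 (hST hx), fun u hu => ha.2 ?_⟩
  rintro t ⟨F, -, -, hFS, ht⟩
  exact ht.2 fun y hy => hu (hFS hy)

theorem subset_scottClosure {P : Type*} [PartialOrder P] (S : Set P) : S ⊆ scottClosure S :=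
  fun _ hx _ hC => hC.2 hx

theorem isScottClosed_scottClosure {P : Type*} [PartialOrder P] (S : Set P) :
    IsScottClosed (scottClosure S) :=
  ⟨fun _ _ hba ha C hC => hC.1.1 hba (ha C hC),
    fun d hd hne hdir a ha C hC => hC.1.2 d (fun _ hx => hd hx C hC) hne hdir a ha⟩

/-- Every nonempty family in `Γ(P)`, directed or not, has a least upper bound. -/
theorem exists_isLUB_gamma {P : Type u} [PartialOrder P] {D : Set (Gamma P)} (hD : D.Nonempty) :
    ∃ B, IsLUB D B := by
  let U : Set P := {x | ∃ C ∈ D, x ∈ C.1}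
  have hU : U.Nonempty := by
    obtain ⟨C, hC⟩ := hD
    obtain ⟨x, hx⟩ := C.2.2
    exact ⟨x, C, hC, hx⟩
  refine ⟨⟨scottClosure U, isScottClosed_scottClosure U, hU.mono (subset_scottClosure U)⟩, ?_, ?_⟩
  · exact fun C hC x hx => subset_scottClosure U ⟨C, hC, hx⟩
  · rintro E hE x hx
    refine hx E.1 ⟨E.2.1, ?_⟩
    rintro y ⟨C, hC, hy⟩
    exact hE hC hy

theorem isScottClosed_preimage_Iic {P L : Type*} [PartialOrder P] [PartialOrder L] {f : P → L}
    (hf : IsScottContinuous f) (s : L) : IsScottClosed {x | f x ≤ s} := by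
  refine ⟨fun a b hba ha => (hf.monotone hba).trans ha, fun d hd hne hdir a ha => ?_⟩
  refine (hf d hne hdir a ha).2 ?_
  rintro _ ⟨x, hx, rfl⟩
  exact hd hx

theorem isScottClosed_supExisting {P : Type u} [PartialOrder P] :
    IsScottClosed {C : Gamma P | SupExisting.{u, v} C.1} := by
  constructor
  · intro A B hBA hA L _ hL f hf
    obtain ⟨a, ha⟩ := hA L hL f hf
    exact exists_isLUB_of_bddAbove hL (B.2.2.image f) ⟨a, fun y hy => ha.1 (Set.image_mono hBA hy)⟩
  · intro D hD hne hdir A hA L _ hL f hf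
    let T : Set L := {t | ∃ C ∈ D, IsLUB (f '' C.1) t}
    have hTne : T.Nonempty := by
      obtain ⟨C, hC⟩ := hne
      obtain ⟨t, ht⟩ := hD hC L hL f hf
      exact ⟨t, C, hC, ht⟩
    have hTdir : DirectedOn (· ≤ ·) T := by
      rintro a ⟨C, hC, ha⟩ b ⟨E, hE, hb⟩
      obtain ⟨G, hG, hCG, hEG⟩ := hdir C hC E hE
      obtain ⟨t, ht⟩ := hD hG L hL f hf
      exact ⟨t, ⟨G, hG, ht⟩, ha.2 fun y hy => ht.1 (Set.image_mono hCG hy),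
        hb.2 fun y hy => ht.1 (Set.image_mono hEG hy)⟩
    obtain ⟨s, hs⟩ := hL.1 T hTne hTdir
    have hDs : ∀ C ∈ D, C.1 ⊆ {x | f x ≤ s} := by
      intro C hC x hx
      obtain ⟨t, ht⟩ := hD hC L hL f hf
      exact (ht.1 ⟨x, hx, rfl⟩).trans (hs.1 ⟨C, hC, ht⟩)
    have hsne : {x | f x ≤ s}.Nonempty := by
      obtain ⟨C, hC⟩ := hne
      exact C.2.2.mono (hDs C hC)
    have hAs : A ≤ (⟨{x | f x ≤ s}, isScottClosed_preimage_Iic hf s, hsne⟩ : Gamma P) :=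
      hA.2 fun C hC => hDs C hC
    refine ⟨s, ?_, fun u hu => hs.2 ?_⟩
    · rintro _ ⟨x, hx, rfl⟩
      exact hAs hx
    · rintro t ⟨C, hC, ht⟩
      refine ht.2 fun y hy => hu (Set.image_mono ?_ hy)
      exact hA.1 hC

/-- A Scott closed family in `Γ(P)` is a dcpo-∨↑-semilattice, with least upper bounds computed
in `Γ(P)`. -/
theorem isDcpoVSemilattice_of_isScottClosed {P : Type u} [PartialOrder P] {K : Set (Gamma P)}
    (hK : IsScottClosed K) : IsDcpoVSemilattice K := by
  constructor
  · intro d hne hdir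
    obtain ⟨B, hB⟩ := exists_isLUB_gamma (hne.image Subtype.val)
    have hdir' : DirectedOn (· ≤ ·) (Subtype.val '' d) := by
      rintro _ ⟨a, ha, rfl⟩ _ ⟨b, hb, rfl⟩
      obtain ⟨c, hc, hac, hbc⟩ := hdir a ha b hb
      exact ⟨c.1, ⟨c, hc, rfl⟩, hac, hbc⟩
    have hBK : B ∈ K := hK.2 _ (by rintro _ ⟨a, _, rfl⟩; exact a.2) (hne.image _) hdir' B hB
    refine ⟨⟨B, hBK⟩, fun a ha => hB.1 ⟨a, ha, rfl⟩, fun u hu => hB.2 ?_⟩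
    rintro _ ⟨a, ha, rfl⟩
    exact hu ha
  · rintro x y ⟨u, hu⟩
    obtain ⟨B, hB⟩ := exists_isLUB_gamma (D := {x.1, y.1}) ⟨x.1, by simp⟩
    have hle : ∀ v : K, v ∈ upperBounds ({x, y} : Set K) → B ≤ v.1 := by
      intro v hv
      refine hB.2 ?_
      rintro _ (rfl | rfl)
      · exact hv (Set.mem_insert _ _)
      · exact hv (Set.mem_insert_of_mem _ rfl)
    refine ⟨⟨B, hK.1 (hle u hu) u.2⟩, ?_, fun v hv => hle v hv⟩
    rintro _ (rfl | rfl)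
    · exact hB.1 (Set.mem_insert _ _)
    · exact hB.1 (Set.mem_insert_of_mem _ rfl)

/-- A nonempty Scott closed subset `A` of a dcpo `P` belongs to the Scott
closure, inside `Γ(P)`, of the family `Γ_c(P)` of nonempty consistent Scott closed subsets,
iff `A` is ⋁-existing. -/
theorem mem_scottClosure_gammaC_iff {P : Type u} [PartialOrder P] (hP : IsDcpo P)
    (A : Set P) (hA : IsScottClosed A) (hne : A.Nonempty) :
    (⟨A, hA, hne⟩ : Gamma P) ∈ scottClosure {C : Gamma P | BddAbove C.1} ↔
      SupExisting.{u, u} A := by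
  constructor
  · intro h
    refine h {C : Gamma P | SupExisting.{u, u} C.1} ⟨isScottClosed_supExisting, ?_⟩
    rintro C ⟨b, hb⟩ L _ hL f hf
    refine exists_isLUB_of_bddAbove hL (C.2.2.image f) ⟨f b, ?_⟩
    rintro _ ⟨x, hx, rfl⟩
    exact hf.monotone (hb hx)
  · intro h
    have hK := isScottClosed_scottClosure {C : Gamma P | BddAbove C.1}
    let j : P → scottClosure {C : Gamma P | BddAbove C.1} := fun x =>
      ⟨⟨Set.Iic x, isScottClosed_principal x, x, le_refl x⟩,
        subset_scottClosure _ ⟨x, fun _ hy => hy⟩⟩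
    have hj : IsScottContinuous j := by
      intro d hd hdir a ha
      refine ⟨?_, fun u hu => ?_⟩
      · rintro _ ⟨x, hx, rfl⟩ y hy
        exact le_trans hy (ha.1 hx)
      · have hau : a ∈ u.1.1 := u.1.2.1.2 d
          (fun x hx => hu ⟨x, hx, rfl⟩ (le_refl x)) hd hdir a ha
        exact fun y hy => u.1.2.1.1 hy hau
    obtain ⟨S, hS⟩ := h _ (isDcpoVSemilattice_of_isScottClosed hK) j hj
    refine hK.1 (fun x hx => ?_) S.2
    exact hS.1 ⟨x, hx, rfl⟩ (le_refl x)
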